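/- arXiv:math/9204236 — 2 statements merged into one kernel-verified Lean document; each statement's English description precedes it below -/
import Mathlib

section
/- (A_ℓ Bailey Transform, first orthogonality relation.) Let ℓ ≥ 1, let q, a, x_1, …, x_ℓ be nonzero complex numbers such that every q-shifted factorial occurring in a denominator below is nonzero. For vectors i, j of nonnegative integers of length ℓ define M(i;j) := ∏_{r,s=1}^{ℓ} ((q x_r/x_s) q^{j_r−j_s}; q)_{i_r−j_r}^{−1} · ∏_{k=1}^{ℓ} (a q x_k/x_ℓ; q)_{i_k+(j_1+⋯+j_ℓ)}^{−1}, and M*(i;j) := ∏_{k=1}^{ℓ} [1 − a (x_k/x_ℓ) q^{i_k+(i_1+⋯+i_ℓ)}] · ∏_{k=1}^{ℓ} (a q x_k/x_ℓ; q)_{j_k+(i_1+⋯+i_ℓ)−1} · ∏_{r,s=1}^{ℓ} ((q x_r/x_s) q^{j_r−j_s}; q)_{i_r−j_r}^{−1} · (−1)^{|i|−|j|} q^{binom(|i|−|j|,2)}, where |i| = i_1+⋯+i_ℓ. Then for all vectors i, j of nonnegative integers of length ℓ, the sum over all vectors y with j_k ≤ y_k ≤ i_k for k = 1, …, ℓ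 of M(i;y)·M*(y;j) equals ∏_{k=1}^{ℓ} δ(i_k, j_k), where δ(r,s) = 1 if r = s and 0 otherwise (in particular the sum is empty and equals 0 unless j_k ≤ i_k for all k). -/
set_option autoImplicit false
set_option maxHeartbeats 1000000

open Finset

/-- The `q`-shifted factorial `(a; q)_n`, extended to all integers `n` by the
standard convention `(a;q)_{-m} = 1 / ∏_{k=1}^{m} (1 - a q^{-k})`. -/
noncomputable def qp (a q : ℂ) (n : ℤ) : ℂ :=
  if 0 ≤ n then ∏ k ∈ Finset.range n.toNat, (1 - a * q ^ (k : ℤ))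
  else (∏ k ∈ Finset.range (-n).toNat, (1 - a * q ^ (-(k : ℤ) - 1)))⁻¹

/-- The `A_ℓ` Bailey transform matrix `M(i;j)`; `xl` denotes `x_ℓ`. -/
noncomputable def MA (ℓ : ℕ) (q a : ℂ) (x : Fin ℓ → ℂ) (xl : ℂ)
    (i j : Fin ℓ → ℕ) : ℂ :=
  (∏ r, ∏ s,
    (qp (q * (x r / x s) * q ^ ((j r : ℤ) - (j s : ℤ))) q ((i r : ℤ) - (j r : ℤ)))⁻¹) *
  ∏ k, (qp (a * q * (x k / xl)) q ((i k : ℤ) + ∑ s, (j s : ℤ)))⁻¹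

/-- The `A_ℓ` Bailey transform matrix `M*(i;j)`; `xl` denotes `x_ℓ`. -/
noncomputable def MAstar (ℓ : ℕ) (q a : ℂ) (x : Fin ℓ → ℂ) (xl : ℂ)
    (i j : Fin ℓ → ℕ) : ℂ :=
  (∏ k, (1 - a * (x k / xl) * q ^ ((i k : ℤ) + ∑ s, (i s : ℤ)))) *
  (∏ k, qp (a * q * (x k / xl)) q ((j k : ℤ) + (∑ s, (i s : ℤ)) - 1)) *
  (∏ r, ∏ s,
    (qp (q * (x r / x s) * q ^ ((j r : ℤ) - (j s : ℤ))) q ((i r : ℤ) - (j r : ℤ)))⁻¹) *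
  (-1 : ℂ) ^ ((∑ s, (i s : ℤ)) - ∑ s, (j s : ℤ)) *
  q ^ (((∑ s, (i s : ℤ)) - ∑ s, (j s : ℤ)) *
        ((∑ s, (i s : ℤ)) - (∑ s, (j s : ℤ)) - 1) / 2)

lemma pair_id (q X Y : ℂ) (n p : ℕ) :
    (∏ m ∈ range n, (Y - X * q ^ (m+1))) * (∏ m ∈ range p, (X - Y * q ^ (m+1))) * (Y - X) * q ^ (n*p)
    = (∏ m ∈ range n, (Y * q ^ p - X * q ^ m)) * (∏ m ∈ range p, (X * q ^ n - Y * q ^ m)) * (Y * q ^ p - X * q ^ n) := by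
  have key : ∀ n : ℕ, (∏ m ∈ range p, (X * q ^ (n+1) - Y * q ^ m)) * (Y * q ^ p - X * q ^ (n+1))
      = (∏ m ∈ range p, (X * q ^ n - Y * q ^ m)) * q ^ p * (Y - X * q ^ (n+1)) := by
    intro n
    have h1 : (∏ m ∈ range p, (X * q ^ (n+1) - Y * q ^ m)) * (X * q ^ (n+1) - Y * q ^ p)
        = ∏ m ∈ range (p+1), (X * q ^ (n+1) - Y * q ^ m) := (prod_range_succ _ _).symm
    rw [prod_range_succ'] at h1
    have h2 : ∏ m ∈ range p, (X * q ^ (n+1) - Y * q ^ (m+1)) = (∏ m ∈ range p, (X * q ^ n - Y * q ^ m)) * q ^ p := by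
      have : q ^ p = ∏ m ∈ range p, q := by simp
      rw [this, ← prod_mul_distrib]
      exact prod_congr rfl fun m _ => by ring
    rw [h2] at h1
    linear_combination -h1
  induction n with
  | zero =>
    have h1 : (∏ m ∈ range p, (X - Y * q ^ m)) * (X - Y * q ^ p)
        = ∏ m ∈ range (p+1), (X - Y * q ^ m) := (prod_range_succ _ _).symm
    rw [prod_range_succ'] at h1
    simp at h1 ⊢
    linear_combination h1
  | succ n ih =>
    rw [prod_range_succ, prod_range_succ]
    have := key n
    rw [add_mul, one_mul, pow_add q (n*p) p]
    linear_combination (Y - X * q ^ (n+1)) * q ^ p * ih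
      - (∏ m ∈ range n, (Y * q ^ p - X * q ^ m)) * (Y * q ^ p - X * q ^ n) * this

lemma diag_id (q X : ℂ) (n : ℕ) :
    (∏ m ∈ range n, (X - X * q ^ (m+1))) * ((-1) ^ n * q ^ (n.choose 2)) = ∏ m ∈ range n, (X * q ^ n - X * q ^ m) := by
  rw [← prod_range_reflect (fun m => X - X * q ^ (m+1))]
  have h2 : q ^ (n.choose 2) = ∏ m ∈ range n, q ^ m := by
    rw [prod_pow_eq_pow_sum, sum_range_id, Nat.choose_two_right]
  have h1 : ((-1:ℂ)) ^ n = ∏ m ∈ range n, (-1) := by simp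
  rw [h1, h2, ← prod_mul_distrib, ← prod_mul_distrib]
  refine prod_congr rfl fun m hm => ?_
  have hm := mem_range.1 hm
  obtain ⟨d, rfl⟩ := Nat.exists_eq_add_of_lt hm
  have : m + d + 1 - 1 - m + 1 = d + 1 := by omega
  rw [this]; ring

lemma choose_two_nat (n : ℕ) : 2 * n.choose 2 + n = n * n := by
  induction n with
  | zero => simp
  | succ n ih =>
    rw [Nat.choose_succ_succ' n 1, Nat.choose_one_right]; nlinarith

lemma choose_sum {ℓ : ℕ} (n : Fin ℓ → ℕ) :
    ∑ r, (n r).choose 2 + ∑ r, ∑ s ∈ Ioi r, n r * n s = (∑ r, n r).choose 2 := by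
  have h1 := choose_two_nat (∑ r, n r)
  have h2 : ∑ r, n r * n r + 2 * ∑ r, ∑ s ∈ Ioi r, n r * n s = (∑ r, n r) * (∑ r, n r) := by
    have h := Finset.sum_sum_Ioi_add_eq_sum_sum_off_diag (fun s r : Fin ℓ => n r * n s)
    have h3 : ∑ r, ∑ s ∈ Ioi r, (n r * n s + n s * n r) = 2 * ∑ r, ∑ s ∈ Ioi r, n r * n s := by
      rw [mul_sum]; refine sum_congr rfl fun r _ => ?_
      rw [mul_sum]; exact sum_congr rfl fun s _ => by ring
    rw [← h3, h, sum_mul_sum, ← sum_add_distrib]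
    refine sum_congr rfl fun r _ => ?_
    rw [← Finset.sum_compl_add_sum {r}, add_comm]
    simp
  have h3 : 2 * ∑ r, (n r).choose 2 + ∑ r, n r = ∑ r, n r * n r := by
    rw [mul_sum, ← sum_add_distrib]; exact sum_congr rfl fun r _ => choose_two_nat _
  omega

lemma prod_pairs {ℓ : ℕ} (f : Fin ℓ → Fin ℓ → ℂ) :
    ∏ r, ∏ s, f r s = (∏ r, f r r) * ∏ r, ∏ s ∈ Ioi r, f r s * f s r := by
  have h := Finset.prod_prod_Ioi_mul_eq_prod_prod_off_diag (fun s r : Fin ℓ => f r s)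
  rw [h, ← prod_mul_distrib]
  refine prod_congr rfl fun r _ => ?_
  rw [← Finset.prod_compl_mul_prod {r}, mul_comm]
  simp

lemma AB_id {ℓ : ℕ} (q : ℂ) (X : Fin ℓ → ℂ) (n : Fin ℓ → ℕ) :
    (∏ r, ∏ s, ∏ m ∈ range (n r), (X s - X r * q ^ (m+1))) * (∏ r, ∏ s ∈ Ioi r, (X s - X r))
      * ((-1) ^ (∑ r, n r) * q ^ ((∑ r, n r).choose 2))
    = (∏ r, ∏ s, ∏ m ∈ range (n r), (X s * q ^ n s - X r * q ^ m)) * (∏ r, ∏ s ∈ Ioi r, (X s * q ^ n s - X r * q ^ n r)) := by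
  rw [prod_pairs, prod_pairs (fun r s => ∏ m ∈ range (n r), (X s * q ^ n s - X r * q ^ m)), ← choose_sum, pow_add,
    ← prod_pow_eq_pow_sum, ← prod_pow_eq_pow_sum, ← prod_pow_eq_pow_sum]
  simp_rw [← prod_pow_eq_pow_sum]
  have e1 : ∏ r, ∏ m ∈ range (n r), (X r * q ^ n r - X r * q ^ m)
     = (∏ r, ∏ m ∈ range (n r), (X r - X r * q ^ (m+1))) * ((∏ r, (-1) ^ (n r)) * ∏ r, q ^ ((n r).choose 2)) := by
    rw [← prod_mul_distrib, ← prod_mul_distrib]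
    exact prod_congr rfl fun r _ => (diag_id _ _ _).symm
  have e2 : (∏ r, ∏ s ∈ Ioi r, (∏ m ∈ range (n r), (X s - X r * q ^ (m+1))) * (∏ m ∈ range (n s), (X r - X s * q ^ (m+1))))
      * (∏ r, ∏ s ∈ Ioi r, (X s - X r)) * (∏ r, ∏ s ∈ Ioi r, q ^ (n r * n s))
     = (∏ r, ∏ s ∈ Ioi r, (∏ m ∈ range (n r), (X s * q ^ n s - X r * q ^ m)) * (∏ m ∈ range (n s), (X r * q ^ n r - X s * q ^ m)))
      * (∏ r, ∏ s ∈ Ioi r, (X s * q ^ n s - X r * q ^ n r)) := by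
    simp_rw [← prod_mul_distrib]
    refine prod_congr rfl fun r _ => prod_congr rfl fun s _ => ?_
    simpa only [prod_mul_distrib] using pair_id q (X r) (X s) (n r) (n s)
  rw [e1]
  linear_combination (∏ r, ∏ m ∈ range (n r), (X r - X r * q ^ (m+1))) * ((∏ r, (-1) ^ (n r)) * ∏ r, q ^ ((n r).choose 2)) * e2

lemma core {ℓ : ℕ} (hℓ : 0 < ℓ) (v g : Fin ℓ → ℕ → ℂ) (t : Fin ℓ → Finset ℕ)
    (H : ∀ p : Fin ℓ, ∑ r, ∑ m ∈ t r, g r m * v r m ^ (p : ℕ) = 0) :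
    ∑ n ∈ Fintype.piFinset t, (∏ r, ∏ s ∈ Ioi r, (v s (n s) - v r (n r))) * ∏ r, g r (n r) = 0 := by
  have hM : (Matrix.of fun r p : Fin ℓ => ∑ m ∈ t r, g r m * v r m ^ (p : ℕ)).det = 0 := by
    rw [← Matrix.exists_vecMul_eq_zero_iff]
    refine ⟨fun _ => 1, fun h => one_ne_zero (congrFun h ⟨0, hℓ⟩), ?_⟩
    ext p
    simpa [Matrix.vecMul, dotProduct] using H p
  rw [← hM, ← Matrix.det_transpose, Matrix.det_apply']
  simp only [Matrix.transpose_apply, Matrix.of_apply, prod_univ_sum, mul_sum]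
  rw [sum_comm]
  refine sum_congr rfl fun n _ => ?_
  rw [← Matrix.det_vandermonde (fun r => v r (n r)), ← Matrix.det_transpose, Matrix.det_apply', sum_mul]
  refine sum_congr rfl fun σ _ => ?_
  simp only [Matrix.transpose_apply, Matrix.vandermonde_apply, prod_mul_distrib]
  ring

lemma range_split (N n : ℕ) (h : n ≤ N) (f : ℕ → ℂ) :
    ∏ m ∈ range (N+1), f m = (∏ m ∈ range n, f m) * f n * ∏ m ∈ range (N - n), f (n + 1 + m) := by
  have : N + 1 = (n + 1) + (N - n) := by omega
  rw [this, prod_range_add, prod_range_succ]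

noncomputable def Wt {ℓ : ℕ} (q : ℂ) (X : Fin ℓ → ℂ) (N : Fin ℓ → ℕ) (s : Fin ℓ) (p : ℕ) : ℂ :=
  ∏ r, ∏ m ∈ range (N r + 1), if r = s ∧ m = p then 1 else (X s * q ^ p - X r * q ^ m)

noncomputable def Kt {ℓ : ℕ} (q : ℂ) (X : Fin ℓ → ℂ) (N : Fin ℓ → ℕ) : ℂ :=
  (∏ r, X r) ^ (∑ r, N r) * (-1) ^ (∑ r, N r) * q ^ ((∑ r, N r).choose 2) * (∏ r, ∏ s ∈ Ioi r, (X s - X r))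
   * (∏ r : Fin ℓ, ∏ s ∈ Ioi r, (-1))

lemma term_id {ℓ : ℕ} (q : ℂ) (hq : q ≠ 0) (X : Fin ℓ → ℂ) (hX : ∀ r, X r ≠ 0) (N n : Fin ℓ → ℕ)
    (hn : ∀ r, n r ≤ N r) (hinj : ∀ r s m p, X r * q ^ m = X s * q ^ p → r = s ∧ m = p) :
    (∏ r, ∏ s, (∏ m ∈ range (N r - n r), (1 - X r * q ^ (n r + 1 + m) / (X s * q ^ n s)))⁻¹) *
    (∏ r, ∏ s, (∏ m ∈ range (n r), (1 - X r * q ^ (m + 1) / X s))⁻¹) *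
    ((-1) ^ (∑ r, (N r - n r)) * q ^ ((∑ r, (N r - n r)).choose 2))
    = Kt q X N * (∏ r, ∏ s ∈ Ioi r, (X s * q ^ n s - X r * q ^ n r)) * ∏ s, (Wt q X N s (n s))⁻¹ := by
  have hI := AB_id q X n
  set a := ∏ r, ∏ s, ∏ m ∈ range (n r), (X s - X r * q ^ (m+1)) with ha
  set b := ∏ r, ∏ s, ∏ m ∈ range (n r), (X s * q ^ n s - X r * q ^ m) with hb
  set d := ∏ r, ∏ s ∈ Ioi r, (X s - X r) with hd
  set e := ∏ r, ∏ s ∈ Ioi r, (X s * q ^ n s - X r * q ^ n r) with he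
  set f := ∏ r, ∏ s, ∏ m ∈ range (N r - n r), (X s * q ^ n s - X r * q ^ (n r + 1 + m)) with hf
  set σ : ℂ := ∏ r : Fin ℓ, ∏ s ∈ Ioi r, (-1) with hσ
  have hσ0 : σ ≠ 0 := prod_ne_zero_iff.2 fun r _ => prod_ne_zero_iff.2 fun s _ => by norm_num
  have ha0 : a ≠ 0 := prod_ne_zero_iff.2 fun r _ => prod_ne_zero_iff.2 fun s _ => prod_ne_zero_iff.2 fun m _ => by
    intro h
    have := hinj s r 0 (m+1) (by rw [pow_zero, mul_one]; linear_combination h)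
    omega
  have hb0 : b ≠ 0 := prod_ne_zero_iff.2 fun r _ => prod_ne_zero_iff.2 fun s _ => prod_ne_zero_iff.2 fun m hm => by
    intro h
    obtain ⟨rfl, h2⟩ := hinj s r (n s) m (by linear_combination h)
    have := mem_range.1 hm
    omega
  have hf0 : f ≠ 0 := prod_ne_zero_iff.2 fun r _ => prod_ne_zero_iff.2 fun s _ => prod_ne_zero_iff.2 fun m hm => by
    intro h
    obtain ⟨rfl, h2⟩ := hinj s r (n s) (n r + 1 + m) (by linear_combination h)
    omega
  have he0 : e ≠ 0 := prod_ne_zero_iff.2 fun r _ => prod_ne_zero_iff.2 fun s hs => by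
    intro h
    obtain ⟨rfl, h2⟩ := hinj s r (n s) (n r) (by linear_combination h)
    exact lt_irrefl _ (mem_Ioi.1 hs)
  have hd0 : d ≠ 0 := prod_ne_zero_iff.2 fun r _ => prod_ne_zero_iff.2 fun s hs => by
    intro h
    obtain ⟨rfl, h2⟩ := hinj s r 0 0 (by linear_combination h)
    exact lt_irrefl _ (mem_Ioi.1 hs)
  have hW : ∏ s, (Wt q X N s (n s)) = b * f * (σ * e ^ 2) := by
    have h1 : ∀ s, Wt q X N s (n s) = ∏ r, ((∏ m ∈ range (n r), (X s * q ^ n s - X r * q ^ m)) *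
        (∏ m ∈ range (N r - n r), (X s * q ^ n s - X r * q ^ (n r + 1 + m))) *
        (if r = s then 1 else (X s * q ^ n s - X r * q ^ n r))) := by
      intro s
      refine prod_congr rfl fun r _ => ?_
      rw [range_split _ _ (hn r)]
      have e1 : ∀ m ∈ range (n r), (if r = s ∧ m = n s then 1 else (X s * q ^ n s - X r * q ^ m)) = (X s * q ^ n s - X r * q ^ m) := by
        intro m hm
        rw [if_neg]
        rintro ⟨rfl, h⟩
        have := mem_range.1 hm
        omega
      have e2 : ∀ m ∈ range (N r - n r), (if r = s ∧ n r + 1 + m = n s then 1 else (X s * q ^ n s - X r * q ^ (n r + 1 + m))) = (X s * q ^ n s - X r * q ^ (n r + 1 + m)) := by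
        intro m hm
        rw [if_neg]
        rintro ⟨rfl, h⟩
        omega
      rw [prod_congr rfl e1, prod_congr rfl e2]
      have e3 : (if r = s ∧ n r = n s then (1:ℂ) else (X s * q ^ n s - X r * q ^ n r)) = if r = s then 1 else (X s * q ^ n s - X r * q ^ n r) := by
        by_cases h : r = s
        · subst h; simp
        · simp [h]
      rw [e3]; ring
    rw [prod_congr rfl fun s _ => h1 s, prod_comm]
    simp only [prod_mul_distrib]
    rw [← hb, ← hf]
    congr 1
    rw [prod_pairs]
    rw [he, ← prod_pow, hσ]
    simp only [if_true, prod_const_one, one_mul, ← prod_mul_distrib, ← prod_pow]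
    refine prod_congr rfl fun r _ => prod_congr rfl fun s hs => ?_
    have : r ≠ s := (mem_Ioi.1 hs).ne
    rw [if_neg this, if_neg this.symm]
    ring
  have hL1 : (∏ r, ∏ s, (∏ m ∈ range (N r - n r), (1 - X r * q ^ (n r + 1 + m) / (X s * q ^ n s)))) * ((∏ r, X r) * q ^ (∑ r, n r)) ^ (∑ r, (N r - n r)) = f := by
    rw [← prod_pow_eq_pow_sum, ← prod_pow_eq_pow_sum, ← prod_mul_distrib, ← prod_mul_distrib, hf]
    refine prod_congr rfl fun r _ => ?_
    rw [← prod_pow, ← prod_mul_distrib]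
    refine prod_congr rfl fun s _ => ?_
    rw [pow_eq_prod_const _ (N r - n r), ← prod_mul_distrib]
    refine prod_congr rfl fun m _ => ?_
    have := hX s
    field_simp
  have hL2 : (∏ r, ∏ s, (∏ m ∈ range (n r), (1 - X r * q ^ (m + 1) / X s))) * (∏ r, X r) ^ (∑ r, n r) = a := by
    rw [← prod_pow_eq_pow_sum, ← prod_mul_distrib, ha]
    refine prod_congr rfl fun r _ => ?_
    rw [← prod_pow, ← prod_mul_distrib]
    refine prod_congr rfl fun s _ => ?_
    rw [pow_eq_prod_const _ (n r), ← prod_mul_distrib]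
    refine prod_congr rfl fun m _ => ?_
    have := hX s
    field_simp
  simp only [prod_inv_distrib]
  rw [hW]
  unfold Kt
  rw [← hd, ← hσ]
  have hNn : ∑ r, N r = ∑ r, n r + ∑ r, (N r - n r) := by
    rw [← sum_add_distrib]; exact sum_congr rfl fun r _ => by have := hn r; omega
  set D := ∑ r, (N r - n r)
  set n' := ∑ r, n r
  rw [hNn]
  have hch : (n' + D).choose 2 = n'.choose 2 + D.choose 2 + n' * D := by
    have h1 := choose_two_nat (n' + D)
    have h2 := choose_two_nat n'
    have h3 := choose_two_nat D
    nlinarith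
  rw [hch]
  set l1 := ∏ r, ∏ s, (∏ m ∈ range (N r - n r), (1 - X r * q ^ (n r + 1 + m) / (X s * q ^ n s)))
  set l2 := ∏ r, ∏ s, (∏ m ∈ range (n r), (1 - X r * q ^ (m + 1) / X s))
  have hl1 : l1 ≠ 0 := fun h => hf0 (by rw [← hL1, h, zero_mul])
  have hl2 : l2 ≠ 0 := fun h => ha0 (by rw [← hL2, h, zero_mul])
  have hR : (l1 * l2)⁻¹ = (∏ r, X r) ^ (n' + D) * q ^ (n' * D) / (f * a) := by
    have hP : (∏ r, X r) ≠ 0 := prod_ne_zero_iff.2 fun r _ => hX r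
    rw [← hL1, ← hL2, mul_pow, ← pow_mul, pow_add]
    field_simp
  rw [← mul_inv, hR]
  have hbe : b * f * (σ * e ^ 2) = f * σ * e * (a * d * ((-1) ^ n' * q ^ n'.choose 2)) := by rw [hI]; ring
  rw [hbe, pow_add q, pow_add q, pow_add (-1 : ℂ)]
  have : ((-1:ℂ)) ^ n' ≠ 0 := by simp
  field_simp

lemma lag {ℓ : ℕ} (q : ℂ) (X : Fin ℓ → ℂ) (N : Fin ℓ → ℕ) (hN : 0 < ∑ r, N r)
    (hinj : ∀ r s m p, X r * q ^ m = X s * q ^ p → r = s ∧ m = p) (h : Polynomial ℂ)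
    (hh : h.natDegree ≤ ∑ r, N r - 1) (p : Fin ℓ) :
    ∑ r, ∑ m ∈ range (N r + 1), (h.eval (X r * q ^ m) * (Wt q X N r m)⁻¹) * (X r * q ^ m) ^ (p : ℕ) = 0 := by
  let S : Finset (Σ _ : Fin ℓ, ℕ) := univ.sigma fun s => range (N s + 1)
  let v : (Σ _ : Fin ℓ, ℕ) → ℂ := fun z => X z.1 * q ^ z.2
  have hcard : #S = ∑ r, N r + ℓ := by
    simp [S, card_sigma, sum_add_distrib]
  have hv : Set.InjOn v S := by
    rintro ⟨r, m⟩ _ ⟨s, p⟩ _ hz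
    obtain ⟨h1, h2⟩ := hinj r s m p hz
    subst h1 h2; rfl
  have hdeg : (h * Polynomial.X ^ (p:ℕ)).natDegree < #S - 1 := by
    have := Polynomial.natDegree_mul_le (p := h) (q := Polynomial.X ^ (p:ℕ))
    rw [Polynomial.natDegree_X_pow] at this
    have := p.2
    omega
  have hc := Lagrange.coeff_eq_sum (v := v) hv (P := h * Polynomial.X ^ (p:ℕ))
    (lt_of_le_of_lt Polynomial.degree_le_natDegree (by exact_mod_cast (by omega : (h * Polynomial.X ^ (p:ℕ)).natDegree < #S)))
  rw [Polynomial.coeff_eq_zero_of_natDegree_lt hdeg] at hc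
  rw [hc, sum_sigma]
  refine sum_congr rfl fun r _ => sum_congr rfl fun m hm => ?_
  have hW : ∏ j ∈ S.erase ⟨r, m⟩, (v ⟨r, m⟩ - v j) = Wt q X N r m := by
    unfold Wt
    have hmem : (⟨r, m⟩ : Σ _ : Fin ℓ, ℕ) ∈ S := by simpa [S] using hm
    have h1 : ∏ j ∈ S, (if j = ⟨r, m⟩ then 1 else (v ⟨r, m⟩ - v j)) = ∏ j ∈ S.erase ⟨r, m⟩, (v ⟨r, m⟩ - v j) := by
      rw [← mul_prod_erase S _ hmem, if_pos rfl, one_mul]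
      exact prod_congr rfl fun j hj => if_neg (ne_of_mem_erase hj)
    rw [← h1, prod_sigma]
    refine prod_congr rfl fun s _ => prod_congr rfl fun k _ => ?_
    simp [v]
  rw [hW]
  simp [v]
  ring

lemma qp_nat (a q : ℂ) (n : ℕ) : qp a q (n : ℤ) = ∏ k ∈ range n, (1 - a * q ^ k) := by
  unfold qp
  rw [if_pos (by positivity)]
  simp

lemma qp_add (b q : ℂ) (A D : ℕ) :
    qp b q ((A + D : ℕ) : ℤ) = qp b q (A : ℤ) * ∏ m ∈ range D, (1 - b * q ^ (A + m)) := by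
  rw [qp_nat, qp_nat, prod_range_add]

lemma tri_int (D : ℕ) : ((D : ℤ) * ((D : ℤ) - 1) / 2) = ((D.choose 2 : ℕ) : ℤ) := by
  have h := choose_two_nat D
  have h2 : (D : ℤ) * ((D : ℤ) - 1) = 2 * ((D.choose 2 : ℕ) : ℤ) := by
    have : (2 * (D.choose 2 : ℕ) + D : ℤ) = D * D := by exact_mod_cast h
    linarith
  rw [h2]; simp

lemma inj_of {ℓ : ℕ} (q : ℂ) (hq : q ≠ 0) (x : Fin ℓ → ℂ) (hx : ∀ k, x k ≠ 0)
    (hd1 : ∀ i j : Fin ℓ → ℕ, (∀ k, j k ≤ i k) → ∀ r s : Fin ℓ,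
      qp (q * (x r / x s) * q ^ ((j r : ℤ) - (j s : ℤ))) q ((i r : ℤ) - (j r : ℤ)) ≠ 0)
    (r s : Fin ℓ) (m p : ℕ) (h : x r * q ^ m = x s * q ^ p) : r = s ∧ m = p := by
  have hpow : ∀ d : ℕ, q ^ (d + 1) ≠ 1 := by
    intro d hd
    have := hd1 (fun _ => d + 1) (fun _ => 0) (fun _ => by simp) r r
    have e : ((d + 1 : ℕ) : ℤ) - ((0 : ℕ) : ℤ) = ((d + 1 : ℕ) : ℤ) := by simp
    rw [e, qp_nat] at this
    apply this
    apply prod_eq_zero (mem_range.2 (Nat.lt_succ_self d))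
    have := hx r
    simp [this, ← pow_succ', hd]
  by_cases hrs : r = s
  · subst hrs
    refine ⟨rfl, ?_⟩
    have h1 : q ^ m = q ^ p := mul_left_cancel₀ (hx r) h
    rcases lt_trichotomy m p with hl | hl | hl
    · obtain ⟨d, rfl⟩ := Nat.exists_eq_add_of_lt hl
      exfalso; apply hpow d
      have : q ^ m * q ^ (d+1) = q ^ m * 1 := by linear_combination -h1
      exact mul_left_cancel₀ (pow_ne_zero _ hq) this
    · exact hl
    · obtain ⟨d, rfl⟩ := Nat.exists_eq_add_of_lt hl
      exfalso; apply hpow d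
      have : q ^ p * q ^ (d+1) = q ^ p * 1 := by linear_combination h1
      exact mul_left_cancel₀ (pow_ne_zero _ hq) this
  · exfalso
    let J : Fin ℓ → ℕ := fun k => if k = r then m else p + 1
    have := hd1 (fun k => J k + 1) J (fun _ => by simp) r s
    have e : ((J r + 1 : ℕ) : ℤ) - (J r : ℤ) = ((1 : ℕ) : ℤ) := by simp
    rw [e, qp_nat] at this
    apply this
    have e1 : J r = m := by simp [J]
    have e2 : J s = p + 1 := by simp [J, Ne.symm hrs]
    rw [e1, e2, zpow_sub₀ hq, zpow_natCast, zpow_natCast]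
    have := hx s
    simp only [range_one, prod_singleton, pow_zero, mul_one]
    rw [sub_eq_zero]
    field_simp
    linear_combination -q * h

lemma second_off {ℓ : ℕ} (hℓ : 0 < ℓ) (q a : ℂ) (hq : q ≠ 0) (x : Fin ℓ → ℂ) (hx : ∀ k, x k ≠ 0)
    (xl : ℂ)
    (hinj : ∀ r s m p, x r * q ^ m = x s * q ^ p → r = s ∧ m = p)
    (hd2 : ∀ i j : Fin ℓ → ℕ, (∀ k, j k ≤ i k) → ∀ k : Fin ℓ,
      qp (a * q * (x k / xl)) q ((i k : ℤ) + ∑ s, (j s : ℤ)) ≠ 0)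
    (i j : Fin ℓ → ℕ) (hij : j ≤ i) (hne : i ≠ j) :
    ∑ y ∈ Icc j i, MAstar ℓ q a x xl i y * MA ℓ q a x xl y j = 0 := by
  obtain ⟨N, rfl⟩ : ∃ N, i = j + N := ⟨i - j, (add_tsub_cancel_of_le hij).symm⟩
  have hN : 0 < ∑ r, N r := by
    rw [Nat.pos_iff_ne_zero]
    intro h
    apply hne
    ext k
    have := (sum_eq_zero_iff.1 h) k (mem_univ _)
    simp [this]
  have hset : ∑ y ∈ Icc j (j + N), MAstar ℓ q a x xl (j + N) y * MA ℓ q a x xl y j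
      = ∑ n ∈ Fintype.piFinset (fun r => range (N r + 1)), MAstar ℓ q a x xl (j + N) (j + n) * MA ℓ q a x xl (j + n) j := by
    refine sum_bij' (fun y _ => y - j) (fun n _ => j + n) ?_ ?_ ?_ ?_ ?_
    · intro y hy
      rw [Fintype.mem_piFinset]
      intro k
      have := (mem_Icc.1 hy).2 k
      simp at this ⊢
      omega
    · intro n hn
      rw [Fintype.mem_piFinset] at hn
      rw [mem_Icc]
      refine ⟨fun k => by simp, fun k => ?_⟩
      have := hn k
      simp at this ⊢
      omega
    · intro y hy
      exact add_tsub_cancel_of_le (mem_Icc.1 hy).1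
    · intro n hn
      exact add_tsub_cancel_left _ _
    · intro y hy
      rw [add_tsub_cancel_of_le (mem_Icc.1 hy).1]
  rw [hset]
  let X : Fin ℓ → ℂ := fun r => x r * q ^ j r
  have hX : ∀ r, X r ≠ 0 := fun r => mul_ne_zero (hx r) (pow_ne_zero _ hq)
  have hXinj : ∀ r s m p, X r * q ^ m = X s * q ^ p → r = s ∧ m = p := by
    intro r s m p h
    simp only [X, mul_assoc, ← pow_add] at h
    obtain ⟨rfl, h2⟩ := hinj _ _ _ _ h
    exact ⟨rfl, by omega⟩
  let h : Polynomial ℂ := ∏ m ∈ range (∑ r, N r - 1),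
    (1 - Polynomial.C (a / xl * q ^ (∑ r, j r + 1 + m)) * Polynomial.X)
  have hh : h.natDegree ≤ ∑ r, N r - 1 := by
    refine (Polynomial.natDegree_prod_le _ _).trans ?_
    refine (sum_le_card_nsmul _ _ 1 fun m _ => ?_).trans (by simp)
    compute_degree
  have hcore := core hℓ (fun r m => X r * q ^ m) (fun r m => h.eval (X r * q ^ m) * (Wt q X N r m)⁻¹)
    (fun r => range (N r + 1)) (lag q X N hN hXinj h hh)
  have hterm : ∀ n ∈ Fintype.piFinset (fun r => range (N r + 1)),
      MAstar ℓ q a x xl (j + N) (j + n) * MA ℓ q a x xl (j + n) j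
      = ((∏ k, (1 - a * (x k / xl) * q ^ (((j + N) k : ℕ) + ∑ s, ((j + N) s : ℤ)))) * Kt q X N) *
      ((∏ r, ∏ s ∈ Ioi r, (X s * q ^ n s - X r * q ^ n r)) *
        ∏ r, (h.eval (X r * q ^ n r) * (Wt q X N r (n r))⁻¹)) := by
    intro n hn
    have hn : ∀ r, n r ≤ N r := fun r => by
      have := Fintype.mem_piFinset.1 hn r
      simp at this; omega
    have hT := term_id q hq X hX N n hn hXinj
    have q1 : ∀ r s, qp (q * (x r / x s) * q ^ (((j + n) r : ℤ) - ((j + n) s : ℤ))) q (((j + N) r : ℤ) - ((j + n) r : ℤ))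
        = ∏ m ∈ range (N r - n r), (1 - X r * q ^ (n r + 1 + m) / (X s * q ^ n s)) := by
      intro r s
      have e : ((j + N) r : ℤ) - ((j + n) r : ℤ) = ((N r - n r : ℕ) : ℤ) := by
        have := hn r
        simp only [Pi.add_apply]; omega
      rw [e, qp_nat]
      refine prod_congr rfl fun m _ => ?_
      have := hx s
      rw [zpow_sub₀ hq, zpow_natCast, zpow_natCast]
      simp only [X, Pi.add_apply]
      congr 1
      field_simp
      ring
    have q2 : ∀ r s, qp (q * (x r / x s) * q ^ ((j r : ℤ) - (j s : ℤ))) q (((j + n) r : ℤ) - (j r : ℤ))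
        = ∏ m ∈ range (n r), (1 - X r * q ^ (m + 1) / X s) := by
      intro r s
      have e : ((j + n) r : ℤ) - (j r : ℤ) = ((n r : ℕ) : ℤ) := by
        simp only [Pi.add_apply]; omega
      rw [e, qp_nat]
      refine prod_congr rfl fun m _ => ?_
      have := hx s
      rw [zpow_sub₀ hq, zpow_natCast, zpow_natCast]
      simp only [X]
      congr 1
      field_simp
      ring
    have q3 : ∀ k, qp (a * q * (x k / xl)) q (((j + n) k : ℤ) + (∑ s, ((j + N) s : ℤ)) - 1)
        = qp (a * q * (x k / xl)) q (((j + n) k : ℤ) + ∑ s, (j s : ℤ)) * h.eval (X k * q ^ n k) := by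
      intro k
      have e1 : (((j + n) k : ℤ) + (∑ s, ((j + N) s : ℤ)) - 1) = ((((j + n) k + ∑ s, j s) + (∑ s, N s - 1) : ℕ) : ℤ) := by
        have : ((∑ s, N s - 1 : ℕ) : ℤ) = ∑ s, (N s : ℤ) - 1 := by
          rw [Nat.cast_sub hN]; simp
        rw [Nat.cast_add, this]
        simp only [Pi.add_apply]
        push_cast
        rw [sum_add_distrib]; ring
      have e2 : (((j + n) k : ℤ) + ∑ s, (j s : ℤ)) = (((j + n) k + ∑ s, j s : ℕ) : ℤ) := by
        push_cast; rfl
      rw [e1, e2, qp_add]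
      congr 1
      simp only [h, Polynomial.eval_prod]
      refine prod_congr rfl fun m _ => ?_
      simp only [X, Pi.add_apply, Polynomial.eval_sub, Polynomial.eval_one, Polynomial.eval_mul, Polynomial.eval_C, Polynomial.eval_X]
      ring
    have hD : (∑ s, ((j + N) s : ℤ)) - ∑ s, ((j + n) s : ℤ) = ((∑ s, (N s - n s) : ℕ) : ℤ) := by
      rw [← sum_sub_distrib]
      push_cast
      refine sum_congr rfl fun s _ => ?_
      have := hn s
      simp only [Pi.add_apply]; omega
    have hQ : ∏ k, qp (a * q * (x k / xl)) q (((j + n) k : ℤ) + ∑ s, (j s : ℤ)) ≠ 0 :=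
      prod_ne_zero_iff.2 fun k _ => hd2 (j + n) j (fun k => by simp) k
    unfold MAstar MA
    simp only [q1, q2, q3, hD]
    rw [tri_int, zpow_natCast, zpow_natCast]
    rw [prod_mul_distrib, prod_mul_distrib, prod_inv_distrib (f := fun k => qp (a * q * (x k / xl)) q (((j + n) k : ℤ) + ∑ s, (j s : ℤ)))]
    set Q := ∏ k, qp (a * q * (x k / xl)) q (((j + n) k : ℤ) + ∑ s, (j s : ℤ))
    set H := ∏ k, h.eval (X k * q ^ n k)
    set P := ∏ k, (1 - a * (x k / xl) * q ^ (((j + N) k : ℤ) + ∑ s, ((j + N) s : ℤ)))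
    have hQQ : Q * Q⁻¹ = 1 := mul_inv_cancel₀ hQ
    generalize (∏ r, ∏ s, (∏ m ∈ range (N r - n r), (1 - X r * q ^ (n r + 1 + m) / (X s * q ^ n s)))⁻¹) = t1 at *
    generalize (∏ r, ∏ s, (∏ m ∈ range (n r), (1 - X r * q ^ (m + 1) / X s))⁻¹) = t2 at *
    generalize (∏ r, ∏ s ∈ Ioi r, (X s * q ^ n s - X r * q ^ n r)) = t3 at *
    generalize (∏ s, (Wt q X N s (n s))⁻¹) = t4 at *
    linear_combination P * H * hT + P * H * t1 * t2 * (-1) ^ (∑ s, (N s - n s)) * q ^ ((∑ s, (N s - n s)).choose 2) * hQQ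
  rw [sum_congr rfl hterm, ← mul_sum, hcore, mul_zero]

lemma second_diag {ℓ : ℕ} (q a : ℂ) (hq : q ≠ 0) (x : Fin ℓ → ℂ)
    (xl : ℂ)
    (hd2 : ∀ i j : Fin ℓ → ℕ, (∀ k, j k ≤ i k) → ∀ k : Fin ℓ,
      qp (a * q * (x k / xl)) q ((i k : ℤ) + ∑ s, (j s : ℤ)) ≠ 0)
    (hd3 : ∀ k : Fin ℓ, (1 : ℂ) - a * (x k / xl) ≠ 0)
    (i : Fin ℓ → ℕ) :
    MAstar ℓ q a x xl i i * MA ℓ q a x xl i i = 1 := by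
  have h0 : ∀ b : ℂ, qp b q 0 = 1 := fun b => by simp [qp]
  unfold MAstar MA
  simp only [sub_self, h0]
  simp only [inv_one, prod_const_one, mul_one, zpow_zero, one_mul, zero_mul, EuclideanDomain.zero_div]
  rw [← prod_mul_distrib, ← prod_mul_distrib]
  refine prod_eq_one fun k _ => ?_
  have hne := hd2 i i (fun _ => le_rfl) k
  have e : (i k : ℤ) + ∑ s, (i s : ℤ) = ((i k + ∑ s, i s : ℕ) : ℤ) := by push_cast; rfl
  rw [e] at hne ⊢
  rw [mul_inv_eq_one₀ hne]
  rcases (i k + ∑ s, i s) with _ | A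
  · have := hd3 k
    have e2 : a * q * (x k / xl) * q⁻¹ = a * (x k / xl) := by field_simp
    simp [qp, e2, this]
  · have : ((A + 1 : ℕ) : ℤ) - 1 = (A : ℤ) := by push_cast; ring
    rw [this, qp_nat, qp_nat, prod_range_succ, zpow_natCast]
    ring

/-- **A_ℓ Bailey Transform, first orthogonality relation.**
For generic parameters, `∑_{j ≤ y ≤ i} M(i;y) M*(y;j) = ∏_k δ(i_k, j_k)`. -/
theorem Al_bailey_transform_first (ℓ : ℕ) (hℓ : 1 ≤ ℓ) (q a : ℂ)
    (hq : q ≠ 0) (ha : a ≠ 0) (x : Fin ℓ → ℂ) (hx : ∀ k, x k ≠ 0)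
    (xl : ℂ) (hxl : xl = x ⟨ℓ - 1, by omega⟩)
    (hd1 : ∀ i j : Fin ℓ → ℕ, (∀ k, j k ≤ i k) → ∀ r s : Fin ℓ,
      qp (q * (x r / x s) * q ^ ((j r : ℤ) - (j s : ℤ))) q ((i r : ℤ) - (j r : ℤ)) ≠ 0)
    (hd2 : ∀ i j : Fin ℓ → ℕ, (∀ k, j k ≤ i k) → ∀ k : Fin ℓ,
      qp (a * q * (x k / xl)) q ((i k : ℤ) + ∑ s, (j s : ℤ)) ≠ 0)
    (hd3 : ∀ k : Fin ℓ, (1 : ℂ) - a * (x k / xl) ≠ 0) :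
    ∀ i j : Fin ℓ → ℕ,
      ∑ y ∈ Finset.Icc j i, MA ℓ q a x xl i y * MAstar ℓ q a x xl y j =
        ∏ k, (if i k = j k then (1 : ℂ) else 0) := by
  intro i j
  classical
  have hinj := inj_of q hq x hx hd1
  by_cases hij : j ≤ i
  swap
  · rw [Icc_eq_empty hij, sum_empty]
    obtain ⟨k, hk⟩ : ∃ k, ¬ j k ≤ i k := by
      by_contra hcon
      push Not at hcon
      exact hij hcon
    exact (prod_eq_zero (mem_univ k) (if_neg (by omega))).symm
  let A : Matrix (Icc j i) (Icc j i) ℂ := Matrix.of fun u v =>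
    if v.1 ≤ u.1 then MA ℓ q a x xl u.1 v.1 else 0
  let B : Matrix (Icc j i) (Icc j i) ℂ := Matrix.of fun u v =>
    if v.1 ≤ u.1 then MAstar ℓ q a x xl u.1 v.1 else 0
  have hBA : B * A = 1 := by
    ext u v
    have hu := mem_Icc.1 u.2
    have hv := mem_Icc.1 v.2
    have h1 : (B * A) u v = ∑ y ∈ Icc v.1 u.1, MAstar ℓ q a x xl u.1 y * MA ℓ q a x xl y v.1 := by
      rw [Matrix.mul_apply]
      simp only [A, B, Matrix.of_apply]
      rw [Finset.sum_coe_sort (Icc j i) (fun y => (if y ≤ u.1 then MAstar ℓ q a x xl u.1 y else 0) * (if v.1 ≤ y then MA ℓ q a x xl y v.1 else 0))]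
      symm
      rw [← Finset.sum_subset (Icc_subset_Icc hv.1 hu.2)]
      · refine sum_congr rfl fun y hy => ?_
        have := mem_Icc.1 hy
        rw [if_pos this.2, if_pos this.1]
      · intro y _ hy
        rw [mem_Icc, not_and_or] at hy
        rcases hy with hy | hy
        · rw [if_neg hy, mul_zero]
        · rw [if_neg hy, zero_mul]
    rw [h1, Matrix.one_apply]
    by_cases huv : u = v
    · subst huv
      rw [if_pos rfl, Icc_self, sum_singleton]
      exact second_diag q a hq x xl hd2 hd3 _
    · rw [if_neg huv]
      by_cases hle : v.1 ≤ u.1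
      · exact second_off (by omega) q a hq x hx xl hinj hd2 u.1 v.1 hle (fun h => huv (Subtype.ext h))
      · rw [Icc_eq_empty hle, sum_empty]
  have hAB : A * B = 1 := mul_eq_one_comm.1 hBA
  have h2 := congrFun (congrFun hAB ⟨i, right_mem_Icc.2 hij⟩) ⟨j, left_mem_Icc.2 hij⟩
  rw [Matrix.mul_apply, Matrix.one_apply] at h2
  simp only [A, B, Matrix.of_apply] at h2
  rw [Finset.sum_coe_sort (Icc j i) (fun y => (if y ≤ i then MA ℓ q a x xl i y else 0) * (if j ≤ y then MAstar ℓ q a x xl y j else 0))] at h2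
  have h3 : ∑ y ∈ Icc j i, MA ℓ q a x xl i y * MAstar ℓ q a x xl y j = if i = j then 1 else 0 := by
    simp only [Subtype.mk_eq_mk] at h2
    rw [← h2]
    refine sum_congr rfl fun y hy => ?_
    have := mem_Icc.1 hy
    rw [if_pos this.2, if_pos this.1]
  rw [h3]
  by_cases h : i = j
  · subst h; simp
  · rw [if_neg h]
    obtain ⟨k, hk⟩ := Function.ne_iff.1 h
    exact (prod_eq_zero (mem_univ k) (if_neg hk)).symm
end

section
/- (C_ℓ Bailey Transform, first orthogonality relation.) Let ℓ ≥ 1, let q, x_1, …, x_ℓ be nonzero complex numbers such that every q-shifted factorial occurring in a denominator below is nonzero. For vectors i, j of nonnegative integers of length ℓ define M(i;j) := ∏_{r,s=1}^{ℓ} [ ((q x_r/x_s) q^{j_r−j_s}; q)_{i_r−j_r}^{−1} · (q x_r x_s q^{j_r+j_s}; q)_{i_r−j_r}^{−1} ] and M*(i;j) := ∏_{r,s=1}^{ℓ} [ ((q x_r/x_s) q^{j_r−j_s}; q)_{i_r−j_r}^{−1} · (x_r x_s q^{j_r+i_s}; q)_{i_r−j_r}^{−1} ] · ∏_{1≤r<s≤ℓ}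 (1 − x_r x_s q^{j_r+j_s})/(1 − x_r x_s q^{i_r+i_s}) · (−1)^{|i|−|j|} q^{binom(|i|−|j|,2)}, where |i| = i_1+⋯+i_ℓ. Then for all vectors i, j of nonnegative integers of length ℓ, the sum over all vectors y with j_k ≤ y_k ≤ i_k for k = 1, …, ℓ of M(i;y)·M*(y;j) equals ∏_{k=1}^{ℓ} δ(i_k, j_k), where δ(r,s) = 1 if r = s and 0 otherwise (in particular the sum is empty and equals 0 unless j_k ≤ i_k for all k). -/
set_option autoImplicit false
set_option maxHeartbeats 1000000

open Finset

/-- The `C_ℓ` Bailey transform matrix `M(i;j)`. -/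
noncomputable def MC (ℓ : ℕ) (q : ℂ) (x : Fin ℓ → ℂ) (i j : Fin ℓ → ℕ) : ℂ :=
  ∏ r, ∏ s,
    ((qp (q * (x r / x s) * q ^ ((j r : ℤ) - (j s : ℤ))) q ((i r : ℤ) - (j r : ℤ)))⁻¹ *
     (qp (q * (x r * x s) * q ^ ((j r : ℤ) + (j s : ℤ))) q ((i r : ℤ) - (j r : ℤ)))⁻¹)

/-- The `C_ℓ` Bailey transform matrix `M*(i;j)`. -/
noncomputable def MCstar (ℓ : ℕ) (q : ℂ) (x : Fin ℓ → ℂ) (i j : Fin ℓ → ℕ) : ℂ :=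
  (∏ r, ∏ s,
    ((qp (q * (x r / x s) * q ^ ((j r : ℤ) - (j s : ℤ))) q ((i r : ℤ) - (j r : ℤ)))⁻¹ *
     (qp ((x r * x s) * q ^ ((j r : ℤ) + (i s : ℤ))) q ((i r : ℤ) - (j r : ℤ)))⁻¹)) *
  (∏ r, ∏ s, if r < s then
      (1 - x r * x s * q ^ ((j r : ℤ) + (j s : ℤ))) /
        (1 - x r * x s * q ^ ((i r : ℤ) + (i s : ℤ)))
    else 1) *
  (-1 : ℂ) ^ ((∑ s, (i s : ℤ)) - ∑ s, (j s : ℤ)) *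
  q ^ (((∑ s, (i s : ℤ)) - ∑ s, (j s : ℤ)) *
        ((∑ s, (i s : ℤ)) - (∑ s, (j s : ℤ)) - 1) / 2)

noncomputable def pn (a q : ℂ) (m : ℕ) : ℂ := ∏ k ∈ Finset.range m, (1 - a * q ^ k)

lemma pn_last (a q : ℂ) (m : ℕ) : pn a q (m+1) = pn a q m * (1 - a * q ^ m) := by
  simp [pn, Finset.prod_range_succ]

lemma pn_first (a q : ℂ) (m : ℕ) : pn a q (m+1) = (1 - a) * pn (a * q) q m := by
  rw [pn, Finset.prod_range_succ', pn, mul_comm]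
  simp only [pow_zero, mul_one]
  congr 1
  refine Finset.prod_congr rfl fun k _ => ?_
  ring

lemma qp_sub (a q : ℂ) (m n : ℕ) (h : n ≤ m) : qp a q ((m:ℤ) - (n:ℤ)) = pn a q (m - n) := by
  have e : ((m:ℤ) - (n:ℤ)) = ((m - n : ℕ) : ℤ) := by omega
  rw [e, qp, if_pos (by omega), Int.toNat_natCast, pn]
  simp

lemma inv_last (a q : ℂ) (m : ℕ) (h : 1 - a * q ^ m ≠ 0) :
    (pn a q m)⁻¹ = (pn a q (m+1))⁻¹ * (1 - a * q ^ m) := by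
  rw [pn_last, mul_inv, mul_assoc, inv_mul_cancel₀ h, mul_one]

lemma inv_first (a q : ℂ) (m : ℕ) (h : 1 - a ≠ 0) :
    (pn (a * q) q m)⁻¹ = (pn a q (m+1))⁻¹ * (1 - a) := by
  rw [pn_first, mul_inv, mul_comm (1-a)⁻¹, mul_assoc, inv_mul_cancel₀ h, mul_one]

lemma inv_shift (a q : ℂ) (m : ℕ) (h : 1 - a ≠ 0) (h' : 1 - a * q ^ m ≠ 0) :
    (pn a q m)⁻¹ = (pn (a * q) q m)⁻¹ * ((1 - a * q ^ m) / (1 - a)) := by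
  rw [inv_last a q m h', inv_first a q m h]
  field_simp

/-- node -/
noncomputable def XX {ℓ : ℕ} (q : ℂ) (x : Fin ℓ → ℂ) (r : Fin ℓ) (m : ℕ) : ℂ := x r * q ^ m

noncomputable def uu (a : ℂ) : ℂ := a + a⁻¹

lemma lagr {ι : Type*} [Fintype ι] [DecidableEq ι] (v w : ι → ℂ) (hv : Function.Injective v)
    (u : ℂ) : ∏ s, (u - w s) = ∏ s, (u - v s) +
      ∑ k, (∏ s, if s = k then 1 else (u - v s) / (v k - v s)) * ∏ s, (v k - w s) := by
  classical
  set f : Polynomial ℂ := Lagrange.nodal Finset.univ w - Lagrange.nodal Finset.univ v with hf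
  have hdeg : f.degree < (Finset.univ : Finset ι).card := by
    have := Polynomial.degree_sub_lt_left (p := Lagrange.nodal Finset.univ w)
      (q := Lagrange.nodal Finset.univ v) (by simp [Lagrange.degree_nodal])
      (Lagrange.nodal_monic.ne_zero) (by rw [Lagrange.nodal_monic.leadingCoeff, Lagrange.nodal_monic.leadingCoeff])
    rwa [Lagrange.degree_nodal] at this
  have h := Lagrange.eq_interpolate (s := Finset.univ) (v := v) (f := f) (hv.injOn) hdeg
  have h2 := congrArg (Polynomial.eval u) h
  rw [Lagrange.interpolate_apply, Polynomial.eval_finsetSum] at h2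
  simp only [hf, Polynomial.eval_sub, Lagrange.eval_nodal, Polynomial.eval_mul, Polynomial.eval_C] at h2
  rw [← sub_eq_iff_eq_add', h2]
  refine Finset.sum_congr rfl fun k _ => ?_
  have z : ∏ s, (v k - v s) = 0 := Finset.prod_eq_zero (Finset.mem_univ k) (sub_self _)
  rw [z, sub_zero, mul_comm]
  congr 1
  rw [Lagrange.basis, Polynomial.eval_prod, ← Finset.mul_prod_erase _ _ (Finset.mem_univ k), if_pos rfl, one_mul]
  refine Finset.prod_congr rfl fun s hs => ?_
  rw [if_neg (Finset.ne_of_mem_erase hs)]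
  simp [Lagrange.basisDivisor]
  ring

lemma MC_eq {ℓ : ℕ} {q : ℂ} (hq : q ≠ 0) (x : Fin ℓ → ℂ) (i j : Fin ℓ → ℕ) (h : j ≤ i) :
    MC ℓ q x i j = ∏ r, ∏ s, ((pn (q * (XX q x r (j r) / XX q x s (j s))) q (i r - j r))⁻¹ *
      (pn (q * (XX q x r (j r) * XX q x s (j s))) q (i r - j r))⁻¹) := by
  unfold MC
  refine Finset.prod_congr rfl fun r _ => Finset.prod_congr rfl fun s _ => ?_
  rw [qp_sub _ _ _ _ (h r), qp_sub _ _ _ _ (h r), zpow_sub₀ hq, zpow_add₀ hq]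
  simp only [zpow_natCast, XX]
  congr 3
  · rw [mul_assoc, div_mul_div_comm]
  · ring

lemma MCs_eq {ℓ : ℕ} {q : ℂ} (hq : q ≠ 0) (x : Fin ℓ → ℂ) (i j : Fin ℓ → ℕ) (h : j ≤ i) :
    MCstar ℓ q x i j = (∏ r, ∏ s, (pn (q * (XX q x r (j r) / XX q x s (j s))) q (i r - j r))⁻¹) *
      (∏ r, ∏ s, (pn (XX q x r (j r) * XX q x s (i s)) q (i r - j r))⁻¹) *
      (∏ r, ∏ s, if r < s then (1 - XX q x r (j r) * XX q x s (j s)) /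
        (1 - XX q x r (i r) * XX q x s (i s)) else 1) *
      ((-1 : ℂ) ^ ((∑ s, (i s : ℤ)) - ∑ s, (j s : ℤ)) *
  q ^ (((∑ s, (i s : ℤ)) - ∑ s, (j s : ℤ)) *
        ((∑ s, (i s : ℤ)) - (∑ s, (j s : ℤ)) - 1) / 2)) := by
  unfold MCstar
  rw [mul_assoc]
  congr 1
  congr 1
  · simp only [← Finset.prod_mul_distrib]
    refine Finset.prod_congr rfl fun r _ => Finset.prod_congr rfl fun s _ => ?_
    rw [qp_sub _ _ _ _ (h r), qp_sub _ _ _ _ (h r), zpow_sub₀ hq, zpow_add₀ hq]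
    simp only [zpow_natCast, XX]
    congr 3
    · rw [mul_assoc, div_mul_div_comm]
    · ring
  · refine Finset.prod_congr rfl fun r _ => Finset.prod_congr rfl fun s _ => ?_
    rw [zpow_add₀ hq, zpow_add₀ hq]
    simp only [zpow_natCast, XX]
    congr 2
    · ring
    · ring

structure Gen {ℓ : ℕ} (q : ℂ) (x : Fin ℓ → ℂ) : Prop where
  hq : q ≠ 0
  hx : ∀ r m, XX q x r m ≠ 0
  g1 : ∀ r s a b, (r ≠ s ∨ a ≠ b) → XX q x r a ≠ XX q x s b
  g2 : ∀ r s a b, (r ≠ s ∨ a + b ≠ 0) → XX q x r a * XX q x s b ≠ 1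

lemma Gen.d1 {ℓ : ℕ} {q : ℂ} {x : Fin ℓ → ℂ} (g : Gen q x) (r s a b) (h : r ≠ s ∨ a ≠ b) :
    1 - XX q x r a / XX q x s b ≠ 0 := by
  rw [sub_ne_zero, ne_comm, Ne, div_eq_one_iff_eq (g.hx _ _)]
  exact g.g1 _ _ _ _ h

lemma Gen.d2 {ℓ : ℕ} {q : ℂ} {x : Fin ℓ → ℂ} (g : Gen q x) (r s a b) (h : r ≠ s ∨ a + b ≠ 0) :
    1 - XX q x r a * XX q x s b ≠ 0 := by
  rw [sub_ne_zero, ne_comm]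
  exact g.g2 _ _ _ _ h

lemma uu_sub (a b : ℂ) (ha : a ≠ 0) (hb : b ≠ 0) :
    (1 - a / b) * (1 - a * b) = a * (uu a - uu b) := by
  unfold uu; field_simp; ring

lemma Gen.du {ℓ : ℕ} {q : ℂ} {x : Fin ℓ → ℂ} (g : Gen q x) (r s a b) (h : r ≠ s ∨ a ≠ b) :
    uu (XX q x r a) - uu (XX q x s b) ≠ 0 := by
  intro h0
  have h1 := uu_sub _ _ (g.hx r a) (g.hx s b)
  rw [h0, mul_zero] at h1
  refine mul_ne_zero (g.d1 r s a b h) (g.d2 r s a b ?_) h1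
  rcases h with h | h
  · exact Or.inl h
  · right; omega

lemma XX_succ {ℓ : ℕ} (q : ℂ) (x : Fin ℓ → ℂ) (r : Fin ℓ) (m : ℕ) :
    XX q x r (m+1) = q * XX q x r m := by unfold XX; ring

lemma XX_sub {ℓ : ℕ} (q : ℂ) (x : Fin ℓ → ℂ) (r : Fin ℓ) (m n : ℕ) (h : n ≤ m) :
    XX q x r n * q ^ (m - n) = XX q x r m := by
  unfold XX; rw [mul_assoc, ← pow_add]; congr 2; omega

lemma F_rec {ℓ : ℕ} {q : ℂ} {x : Fin ℓ → ℂ} (g : Gen q x) (n y : Fin ℓ → ℕ) (k : Fin ℓ)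
    (h : y ≤ n) :
    MC ℓ q x n y = MC ℓ q x (Function.update n k (n k + 1)) y *
      ∏ s, (XX q x k (n k + 1) * (uu (XX q x k (n k + 1)) - uu (XX q x s (y s)))) := by
  have h' : y ≤ Function.update n k (n k + 1) := by
    intro r
    by_cases hr : r = k
    · subst hr; simpa using (h r).trans (Nat.le_succ _)
    · simpa [hr] using h r
  rw [MC_eq g.hq x _ _ h, MC_eq g.hq x _ _ h',
    ← Finset.mul_prod_erase _ _ (Finset.mem_univ k),
    ← Finset.mul_prod_erase Finset.univ (fun r => ∏ s, _) (Finset.mem_univ k),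
    mul_right_comm]
  congr 1
  · rw [← Finset.prod_mul_distrib]
    refine Finset.prod_congr rfl fun s _ => ?_
    rw [← uu_sub _ _ (g.hx _ _) (g.hx _ _)]
    simp only [Function.update_self]
    have hk : y k ≤ n k := h k
    have e : n k + 1 - y k = (n k - y k) + 1 := by omega
    have e1 : q * (XX q x k (y k) / XX q x s (y s)) * q ^ (n k - y k) = XX q x k (n k + 1) / XX q x s (y s) := by
      rw [XX_succ, ← XX_sub q x k _ _ hk]; ring
    have e2 : q * (XX q x k (y k) * XX q x s (y s)) * q ^ (n k - y k) = XX q x k (n k + 1) * XX q x s (y s) := by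
      rw [XX_succ, ← XX_sub q x k _ _ hk]; ring
    have a1 : k ≠ s ∨ n k + 1 ≠ y s := by
      by_cases hs : k = s
      · subst hs; right; omega
      · exact Or.inl hs
    have a2 : k ≠ s ∨ n k + 1 + y s ≠ 0 := by right; omega
    rw [e, inv_last _ _ _ (by rw [e1]; exact g.d1 _ _ _ _ a1),
      inv_last (q * (XX q x k (y k) * XX q x s (y s))) _ _ (by rw [e2]; exact g.d2 _ _ _ _ a2), e1, e2]
    ring
  · refine Finset.prod_congr rfl fun r hr => Finset.prod_congr rfl fun s _ => ?_
    rw [Function.update_of_ne (Finset.ne_of_mem_erase hr)]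

lemma prod_row {ℓ : ℕ} (k : Fin ℓ) (α : Fin ℓ → ℂ) :
    ∏ r, ∏ s, (if r = k then α s else 1) = ∏ s, α s := by
  rw [Finset.prod_eq_single k]
  · simp
  · intro b _ hb; simp [hb]
  · simp

lemma prod_col {ℓ : ℕ} (k : Fin ℓ) (α : Fin ℓ → ℂ) :
    ∏ r, ∏ s, (if s = k then α r else 1) = ∏ r, α r := by
  refine Finset.prod_congr rfl fun r _ => ?_
  simp

section
variable {ℓ : ℕ} {q : ℂ} {x : Fin ℓ → ℂ}

lemma A_rec (g : Gen q x) (y j : Fin ℓ → ℕ) (k : Fin ℓ)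
    (h : Function.update j k (j k + 1) ≤ y) :
    (∏ r, ∏ s, (pn (q * (XX q x r (Function.update j k (j k + 1) r) /
        XX q x s (Function.update j k (j k + 1) s))) q
          (y r - Function.update j k (j k + 1) r))⁻¹) =
    (∏ r, ∏ s, (pn (q * (XX q x r (j r) / XX q x s (j s))) q (y r - j r))⁻¹) *
      ∏ s, ((if s = k then 1 else (1 - XX q x k (j k + 1) / XX q x s (j s))) *
        ((1 - XX q x s (y s) / XX q x k (j k)) /
          (if s = k then 1 else (1 - XX q x s (j s) / XX q x k (j k))))) := by
  have hk : j k + 1 ≤ y k := by simpa using h k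
  rw [Finset.prod_mul_distrib (s := Finset.univ) (f := fun s => if s = k then 1 else (1 - XX q x k (j k + 1) / XX q x s (j s))),
    ← prod_row k (fun s => if s = k then 1 else (1 - XX q x k (j k + 1) / XX q x s (j s))),
    ← prod_col k (fun s => (1 - XX q x s (y s) / XX q x k (j k)) /
          (if s = k then 1 else (1 - XX q x s (j s) / XX q x k (j k))))]
  simp only [← Finset.prod_mul_distrib]
  refine Finset.prod_congr rfl fun r _ => Finset.prod_congr rfl fun s _ => ?_
  by_cases hr : r = k <;> by_cases hs : s = k
  · subst hr; subst hs
    simp only [Function.update_self, if_true]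
    have e : y s - j s = (y s - (j s + 1)) + 1 := by omega
    have e1 : 1 * q ^ (y s - j s) = XX q x s (y s) / XX q x s (j s) := by
      rw [one_mul, eq_div_iff (g.hx _ _), mul_comm, XX_sub]; omega
    have e2 : q * 1 * q ^ (y s - (j s + 1)) = XX q x s (y s) / XX q x s (j s) := by
      rw [← e1, e]; ring
    rw [div_self (g.hx _ _), div_self (g.hx _ _), e,
      inv_last (q * 1) q (y s - (j s + 1)) (by rw [e2]; exact g.d1 _ _ _ _ (by right; omega)), e2]
    simp
  · subst hr
    simp only [Function.update_self, if_true, if_neg hs, Function.update_of_ne hs]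
    have e : y r - j r = (y r - (j r + 1)) + 1 := by omega
    have e1 : q * (XX q x r (j r) / XX q x s (j s)) = XX q x r (j r + 1) / XX q x s (j s) := by
      rw [XX_succ]; ring
    rw [e, e1, mul_comm q, inv_first _ _ _ (g.d1 _ _ _ _ (Or.inl (Ne.symm hs)))]
    simp
  · subst hs
    have hry : j r ≤ y r := by simpa [hr] using h r
    simp only [Function.update_self, if_true, if_neg hr, Function.update_of_ne hr]
    have hq := g.hq
    have e1 : q * (XX q x r (j r) / XX q x s (j s + 1)) = XX q x r (j r) / XX q x s (j s) := by
      rw [XX_succ, mul_div_assoc', mul_div_mul_left _ _ hq]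
    have e2 : XX q x r (j r) / XX q x s (j s) * q ^ (y r - j r) = XX q x r (y r) / XX q x s (j s) := by
      rw [← XX_sub q x r _ _ hry]; ring
    rw [e1, inv_shift _ _ _ (g.d1 _ _ _ _ (Or.inl hr)) (by rw [e2]; exact g.d1 _ _ _ _ (Or.inl hr)), e2, mul_comm q]
    simp
  · simp [hr, hs]

lemma B_rec (g : Gen q x) (y j : Fin ℓ → ℕ) (k : Fin ℓ)
    (h : Function.update j k (j k + 1) ≤ y) :
    (∏ r, ∏ s, (pn (XX q x r (Function.update j k (j k + 1) r) * XX q x s (y s)) q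
          (y r - Function.update j k (j k + 1) r))⁻¹) =
    (∏ r, ∏ s, (pn (XX q x r (j r) * XX q x s (y s)) q (y r - j r))⁻¹) *
      ∏ s, (1 - XX q x k (j k) * XX q x s (y s)) := by
  have hk : j k + 1 ≤ y k := by simpa using h k
  rw [← prod_row k (fun s => 1 - XX q x k (j k) * XX q x s (y s))]
  simp only [← Finset.prod_mul_distrib]
  refine Finset.prod_congr rfl fun r _ => Finset.prod_congr rfl fun s _ => ?_
  by_cases hr : r = k
  · subst hr
    simp only [Function.update_self, if_true]
    have e : y r - j r = (y r - (j r + 1)) + 1 := by omega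
    have e1 : XX q x r (j r + 1) * XX q x s (y s) = XX q x r (j r) * XX q x s (y s) * q := by
      rw [XX_succ]; ring
    have a : r ≠ s ∨ j r + y s ≠ 0 := by
      by_cases hs : r = s
      · subst hs; right; omega
      · exact Or.inl hs
    rw [e, e1, inv_first _ _ _ (g.d2 _ _ _ _ a)]
  · simp [hr]

lemma C_rec (g : Gen q x) (y j : Fin ℓ → ℕ) (k : Fin ℓ) :
    (∏ r, ∏ s, if r < s then (1 - XX q x r (Function.update j k (j k + 1) r) *
        XX q x s (Function.update j k (j k + 1) s)) /
        (1 - XX q x r (y r) * XX q x s (y s)) else 1) =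
    (∏ r, ∏ s, if r < s then (1 - XX q x r (j r) * XX q x s (j s)) /
        (1 - XX q x r (y r) * XX q x s (y s)) else 1) *
      ∏ s, (if s = k then 1 else (1 - XX q x k (j k + 1) * XX q x s (j s)) /
        (1 - XX q x k (j k) * XX q x s (j s))) := by
  have e : ∀ s, (if s = k then 1 else (1 - XX q x k (j k + 1) * XX q x s (j s)) /
        (1 - XX q x k (j k) * XX q x s (j s))) =
      (if k < s then (1 - XX q x k (j k + 1) * XX q x s (j s)) /
        (1 - XX q x k (j k) * XX q x s (j s)) else 1) *
      (if s < k then (1 - XX q x k (j k + 1) * XX q x s (j s)) /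
        (1 - XX q x k (j k) * XX q x s (j s)) else 1) := by
    intro s
    rcases lt_trichotomy s k with hs | hs | hs
    · rw [if_neg hs.ne, if_neg hs.not_gt, if_pos hs, one_mul]
    · subst hs; simp
    · rw [if_neg hs.ne', if_neg hs.not_gt, if_pos hs, mul_one]
  rw [Finset.prod_congr rfl fun s _ => e s, Finset.prod_mul_distrib,
    ← prod_row k (fun s => if k < s then (1 - XX q x k (j k + 1) * XX q x s (j s)) /
        (1 - XX q x k (j k) * XX q x s (j s)) else 1),
    ← prod_col k (fun s => if s < k then (1 - XX q x k (j k + 1) * XX q x s (j s)) /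
        (1 - XX q x k (j k) * XX q x s (j s)) else 1)]
  simp only [← Finset.prod_mul_distrib]
  refine Finset.prod_congr rfl fun r _ => Finset.prod_congr rfl fun s _ => ?_
  by_cases hrs : r < s
  · by_cases hr : r = k
    · subst hr
      have hs : s ≠ r := hrs.ne'
      have := g.d2 r s (j r) (j s) (Or.inl hrs.ne)
      simp only [if_pos hrs, Function.update_self, Function.update_of_ne hs, if_neg hs, if_true, mul_one]
      rw [div_mul_div_comm, mul_comm (1 - XX q x r (j r) * XX q x s (j s)), mul_div_mul_right _ _ this]
    · by_cases hs : s = k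
      · subst hs
        have := g.d2 s r (j s) (j r) (Or.inl hrs.ne')
        simp only [if_pos hrs, Function.update_self, Function.update_of_ne hr, if_neg hr, if_true, one_mul]
        rw [mul_comm (XX q x r (j r)) (XX q x s (j s)), mul_comm (XX q x r (j r)) (XX q x s (j s + 1)), div_mul_div_comm, mul_comm (1 - XX q x s (j s) * XX q x r (j r)), mul_div_mul_right _ _ this]
      · simp [hr, hs]
  · by_cases hr : r = k
    · subst hr
      by_cases hs : s = r
      · subst hs; simp
      · simp [hrs, hs]
    · by_cases hs : s = k
      · subst hs; simp [hrs, hr]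
      · simp [hrs, hr, hs]

lemma sgn_rec (hq : q ≠ 0) (D : ℤ) :
    (-1 : ℂ) ^ D * q ^ (D * (D - 1) / 2) =
      (-1 : ℂ) ^ (D + 1) * q ^ ((D + 1) * (D + 1 - 1) / 2) * (- (q * (q ^ (D+1))⁻¹)) := by
  have e : (D + 1) * (D + 1 - 1) / 2 = D * (D - 1) / 2 + D := by
    have : (D + 1) * (D + 1 - 1) = D * (D - 1) + D * 2 := by ring
    rw [this, Int.add_mul_ediv_right _ _ (by norm_num)]
  rw [e, zpow_add₀ hq, zpow_add₀ hq, zpow_add₀ (by norm_num : (-1:ℂ) ≠ 0), zpow_one, zpow_one]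
  have := zpow_ne_zero D hq
  field_simp
  

lemma G_rec (g : Gen q x) (y j : Fin ℓ → ℕ) (k : Fin ℓ)
    (h : Function.update j k (j k + 1) ≤ y) :
    MCstar ℓ q x y (Function.update j k (j k + 1)) = MCstar ℓ q x y j *
      ((∏ _s : Fin ℓ, XX q x k (j k + 1)) *
        (∏ s, if s = k then 1 else (uu (XX q x k (j k + 1)) - uu (XX q x s (j s))) /
          (uu (XX q x k (j k)) - uu (XX q x s (j s)))) *
        ∏ s, (uu (XX q x k (j k)) - uu (XX q x s (y s)))) := by
  have hle : j ≤ Function.update j k (j k + 1) := by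
    intro r
    by_cases hr : r = k
    · subst hr; simp
    · simp [hr]
  rw [MCs_eq g.hq x _ _ h, MCs_eq g.hq x _ _ (hle.trans h), A_rec g _ _ _ h, B_rec g _ _ _ h, C_rec g]
  set A := (∏ r, ∏ s, (pn (q * (XX q x r (j r) / XX q x s (j s))) q (y r - j r))⁻¹)
  set B := (∏ r, ∏ s, (pn (XX q x r (j r) * XX q x s (y s)) q (y r - j r))⁻¹)
  set C := (∏ r, ∏ s, if r < s then (1 - XX q x r (j r) * XX q x s (j s)) /
        (1 - XX q x r (y r) * XX q x s (y s)) else 1)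
  have hs : ∑ s, ((Function.update j k (j k + 1) s : ℕ) : ℤ) = ∑ s, (j s : ℤ) + 1 := by
    have : ∀ s, ((Function.update j k (j k + 1) s : ℕ) : ℤ) = (j s : ℤ) + if s = k then 1 else 0 := by
      intro s
      by_cases hs : s = k
      · subst hs; simp
      · simp [hs]
    rw [Finset.sum_congr rfl fun s _ => this s, Finset.sum_add_distrib]
    simp
  rw [hs]
  obtain ⟨D, hD⟩ : ∃ D : ℤ, D = ∑ s, (y s : ℤ) - (∑ s, (j s : ℤ) + 1) := ⟨_, rfl⟩
  have hD' : ∑ s, (y s : ℤ) - ∑ s, (j s : ℤ) = D + 1 := by rw [hD]; ring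
  rw [← hD, hD', sgn_rec g.hq D]
  have hpow : q ^ (D + 1) = ∏ s, (XX q x s (y s) / XX q x s (j s)) := by
    rw [← hD', ← Finset.sum_sub_distrib]
    have : ∀ s, XX q x s (y s) / XX q x s (j s) = q ^ ((y s : ℤ) - (j s : ℤ)) := by
      intro s
      have h1 := g.hx s 0
      simp only [XX, pow_zero, mul_one] at h1
      rw [zpow_sub₀ g.hq, XX, XX, mul_div_mul_left _ _ h1]; simp
    rw [Finset.prod_congr rfl fun s _ => this s]
    induction (Finset.univ : Finset (Fin ℓ)) using Finset.induction_on with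
    | empty => simp
    | insert a t ha ih => rw [Finset.sum_insert ha, Finset.prod_insert ha, zpow_add₀ g.hq, ih]
  have hnq : -q = ∏ s, if s = k then -q else 1 := by simp
  have key : (∏ s, ((if s = k then 1 else (1 - XX q x k (j k + 1) / XX q x s (j s))) *
        ((1 - XX q x s (y s) / XX q x k (j k)) /
          (if s = k then 1 else (1 - XX q x s (j s) / XX q x k (j k)))))) *
      (∏ s, (1 - XX q x k (j k) * XX q x s (y s))) *
      (∏ s, (if s = k then 1 else (1 - XX q x k (j k + 1) * XX q x s (j s)) /
        (1 - XX q x k (j k) * XX q x s (j s)))) * (-q * (q ^ (D+1))⁻¹) =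
      ((∏ _s : Fin ℓ, XX q x k (j k + 1)) *
        (∏ s, if s = k then 1 else (uu (XX q x k (j k + 1)) - uu (XX q x s (j s))) /
          (uu (XX q x k (j k)) - uu (XX q x s (j s)))) *
        ∏ s, (uu (XX q x k (j k)) - uu (XX q x s (y s)))) := by
    rw [hpow, hnq, ← Finset.prod_inv_distrib]
    simp only [← Finset.prod_mul_distrib]
    refine Finset.prod_congr rfl fun s _ => ?_
    have hk0 := g.hx k (j k)
    have hy0 := g.hx s (y s)
    have hj0 := g.hx s (j s)
    have hq := g.hq
    have i1 : (1 - XX q x s (y s) / XX q x k (j k)) * (1 - XX q x k (j k) * XX q x s (y s)) =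
        - XX q x s (y s) * (uu (XX q x k (j k)) - uu (XX q x s (y s))) := by
      rw [mul_comm (XX q x k (j k)), uu_sub _ _ hy0 hk0]; ring
    by_cases hsk : s = k
    · subst hsk
      simp only [if_true, div_one, one_mul, mul_one]
      rw [i1, XX_succ]
      field_simp
    · simp only [if_neg hsk, one_mul]
      have i2 := uu_sub _ _ (g.hx k (j k + 1)) hj0
      have i3 := uu_sub _ _ hj0 hk0
      have d1 := g.d1 s k (j s) (j k) (Or.inl hsk)
      have d2 := g.d2 k s (j k) (j s) (Or.inl (Ne.symm hsk))
      have d3 := g.du k s (j k) (j s) (Or.inl (Ne.symm hsk))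
      generalize XX q x k (j k + 1) = N at *
      generalize XX q x k (j k) = K at *
      generalize XX q x s (j s) = J at *
      generalize XX q x s (y s) = Y at *
      have : (1 - N / J) * ((1 - Y / K) / (1 - J / K)) * (1 - K * Y) * ((1 - N * J) / (1 - K * J)) * (Y / J)⁻¹
        = ((1 - N / J) * (1 - N * J)) * ((1 - Y / K) * (1 - K * Y)) / ((1 - J / K) * (1 - J * K)) * (Y / J)⁻¹ := by
        rw [mul_comm J K]; field_simp
      rw [this, i1, i2, i3]
      have d4 : uu J - uu K ≠ 0 := by rw [← neg_sub]; exact neg_ne_zero.mpr d3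
      rw [show uu K - uu J = -(uu J - uu K) by ring]
      field_simp
  rw [← key]
  ring

end

section
variable {ℓ : ℕ} {q : ℂ} {x : Fin ℓ → ℂ}

/-- weighted sum -/
noncomputable def TT (q : ℂ) (x : Fin ℓ → ℂ) (n j : Fin ℓ → ℕ) (u : ℂ) : ℂ :=
  ∑ y ∈ Finset.Icc j n, MC ℓ q x n y * MCstar ℓ q x y j * ∏ s, (u - uu (XX q x s (y s)))

noncomputable def SS (q : ℂ) (x : Fin ℓ → ℂ) (n j : Fin ℓ → ℕ) : ℂ :=
  ∑ y ∈ Finset.Icc j n, MC ℓ q x n y * MCstar ℓ q x y j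

noncomputable def LL (q : ℂ) (x : Fin ℓ → ℂ) (j : Fin ℓ → ℕ) (k : Fin ℓ) (u : ℂ) : ℂ :=
  ∏ s, if s = k then 1 else (u - uu (XX q x s (j s))) /
          (uu (XX q x k (j k)) - uu (XX q x s (j s)))

lemma L1 (g : Gen q x) (n j : Fin ℓ → ℕ) (k : Fin ℓ) :
    (∏ _s : Fin ℓ, XX q x k (n k + 1)) *
      TT q x (Function.update n k (n k + 1)) j (uu (XX q x k (n k + 1))) = SS q x n j := by
  unfold TT SS
  have hle : n ≤ Function.update n k (n k + 1) := by
    intro r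
    by_cases hr : r = k
    · subst hr; simp
    · simp [hr]
  rw [Finset.mul_sum]
  symm
  rw [← Finset.sum_subset (Finset.Icc_subset_Icc_right hle)]
  · refine Finset.sum_congr rfl fun y hy => ?_
    rw [F_rec g n y k (Finset.mem_Icc.1 hy).2, Finset.prod_mul_distrib]
    ring
  · intro y hy hy'
    rw [Finset.mem_Icc] at hy hy'
    have : y k = n k + 1 := by
      by_contra hne
      apply hy'
      refine ⟨hy.1, fun r => ?_⟩
      have : y r ≤ Function.update n k (n k + 1) r := hy.2 r
      by_cases hr : r = k
      · subst hr; simp at this; exact (by omega : y r ≤ n r)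
      · simpa [hr] using this
    have z : ∏ s, (uu (XX q x k (n k + 1)) - uu (XX q x s (y s))) = 0 :=
      Finset.prod_eq_zero (Finset.mem_univ k) (by rw [this, sub_self])
    rw [z]; ring

lemma L2 (g : Gen q x) (n j : Fin ℓ → ℕ) (k : Fin ℓ) :
    (∏ _s : Fin ℓ, XX q x k (j k + 1)) * LL q x j k (uu (XX q x k (j k + 1))) *
      TT q x n j (uu (XX q x k (j k))) = SS q x n (Function.update j k (j k + 1)) := by
  unfold TT SS
  have hle : j ≤ Function.update j k (j k + 1) := by
    intro r
    by_cases hr : r = k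
    · subst hr; simp
    · simp [hr]
  rw [Finset.mul_sum]
  symm
  rw [← Finset.sum_subset (Finset.Icc_subset_Icc_left hle)]
  · refine Finset.sum_congr rfl fun y hy => ?_
    rw [G_rec g y j k (Finset.mem_Icc.1 hy).1, LL]
    ring
  · intro y hy hy'
    rw [Finset.mem_Icc] at hy hy'
    have : y k = j k := by
      by_contra hne
      apply hy'
      refine ⟨fun r => ?_, hy.2⟩
      have : j r ≤ y r := hy.1 r
      by_cases hr : r = k
      · subst hr; simp; omega
      · simpa [hr] using this
    have z : ∏ s, (uu (XX q x k (j k)) - uu (XX q x s (y s))) = 0 :=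
      Finset.prod_eq_zero (Finset.mem_univ k) (by rw [this, sub_self])
    rw [z]; ring

lemma L2z (n j : Fin ℓ → ℕ) (k : Fin ℓ) (h : j k = n k) :
    TT q x n j (uu (XX q x k (j k))) = 0 := by
  unfold TT
  refine Finset.sum_eq_zero fun y hy => ?_
  rw [Finset.mem_Icc] at hy
  have : y k = j k := by
    have h1 : j k ≤ y k := hy.1 k
    have h2 : y k ≤ n k := hy.2 k
    omega
  have z : ∏ s, (uu (XX q x k (j k)) - uu (XX q x s (y s))) = 0 :=
    Finset.prod_eq_zero (Finset.mem_univ k) (by rw [this, sub_self])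
  rw [z]; ring

lemma T_lagr (g : Gen q x) (n j : Fin ℓ → ℕ) (u : ℂ) :
    TT q x n j u = (∏ s, (u - uu (XX q x s (j s)))) * SS q x n j +
      ∑ k, LL q x j k u * TT q x n j (uu (XX q x k (j k))) := by
  unfold TT SS
  simp only [Finset.mul_sum]
  rw [Finset.sum_comm, ← Finset.sum_add_distrib]
  refine Finset.sum_congr rfl fun y _ => ?_
  rw [lagr (fun s => uu (XX q x s (j s))) (fun s => uu (XX q x s (y s))) _ u, mul_add, Finset.mul_sum, mul_comm]
  · congr 1
    refine Finset.sum_congr rfl fun k _ => ?_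
    rw [LL]; ring
  · intro r s hrs
    by_contra hne
    exact g.du r s (j r) (j s) (Or.inl hne) (sub_eq_zero.2 hrs)

lemma SS_self (g : Gen q x) (j : Fin ℓ → ℕ) : SS q x j j = 1 := by
  rw [SS, Finset.Icc_self, Finset.sum_singleton, MC_eq g.hq _ _ _ le_rfl, MCs_eq g.hq _ _ _ le_rfl]
  have : ∀ r s : Fin ℓ, (if r < s then (1 - XX q x r (j r) * XX q x s (j s)) /
        (1 - XX q x r (j r) * XX q x s (j s)) else 1) = 1 := by
    intro r s
    split_ifs with h
    · exact div_self (g.d2 _ _ _ _ (Or.inl h.ne))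
    · rfl
  simp [this, pn]

lemma LL_ne (g : Gen q x) (j : Fin ℓ → ℕ) (k : Fin ℓ) :
    LL q x j k (uu (XX q x k (j k + 1))) ≠ 0 := by
  refine Finset.prod_ne_zero_iff.2 fun s _ => ?_
  split_ifs with h
  · exact one_ne_zero
  · exact div_ne_zero (g.du _ _ _ _ (Or.inl (Ne.symm h))) (g.du _ _ _ _ (Or.inl (Ne.symm h)))

lemma SS_empty (n j : Fin ℓ → ℕ) (h : ¬ j ≤ n) : SS q x n j = 0 := by
  rw [SS, Finset.Icc_eq_empty h, Finset.sum_empty]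

lemma sum_upd (j : Fin ℓ → ℕ) (k : Fin ℓ) :
    ∑ s, Function.update j k (j k + 1) s = ∑ s, j s + 1 := by
  have : ∀ s, Function.update j k (j k + 1) s = j s + if s = k then 1 else 0 := by
    intro s
    by_cases hs : s = k
    · subst hs; simp
    · simp [hs]
  rw [Finset.sum_congr rfl fun s _ => this s, Finset.sum_add_distrib]
  simp

lemma SS_main (g : Gen q x) (d : ℕ) : ∀ n j : Fin ℓ → ℕ, ∑ s, n s = ∑ s, j s + d →
    SS q x n j = if n = j then 1 else 0 := by
  induction d with
  | zero =>
    intro n j h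
    split_ifs with hnj
    · subst hnj; exact SS_self g n
    · apply SS_empty
      intro hle
      apply hnj
      funext s
      exact ((Finset.sum_eq_sum_iff_of_le (fun s _ => hle s)).1 (by omega) s (Finset.mem_univ s)).symm
  | succ d ih =>
    intro n j h
    have hnj : n ≠ j := by rintro rfl; omega
    rw [if_neg hnj]
    by_cases hle : j ≤ n
    swap
    · exact SS_empty _ _ hle
    obtain ⟨k0, hk0⟩ : ∃ k, n k ≠ j k := Function.ne_iff.1 hnj
    have hlt : j k0 < n k0 := lt_of_le_of_ne (hle k0) hk0.symm
    obtain ⟨m, hm⟩ : ∃ m, m = Function.update n k0 (n k0 - 1) := ⟨_, rfl⟩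
    have hmk : m k0 + 1 = n k0 := by rw [hm]; simp; omega
    have hn : Function.update m k0 (m k0 + 1) = n := by
      rw [hmk, hm]; simp
    have hsm : ∑ s, m s = ∑ s, j s + d := by
      have := sum_upd m k0
      rw [hn] at this; omega
    have e1 := L1 g m j k0
    rw [hn, ih m j hsm, hmk] at e1
    have e2 : ∀ k, (∏ _s : Fin ℓ, XX q x k (j k + 1)) * LL q x j k (uu (XX q x k (j k + 1))) *
      TT q x n j (uu (XX q x k (j k))) = if n = Function.update j k (j k + 1) then 1 else 0 := by
      intro k
      rw [L2 g n j k, ih]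
      rw [sum_upd]; omega
    have hN : ∀ k a, (∏ _s : Fin ℓ, XX q x k a) ≠ 0 := fun k a =>
      Finset.prod_ne_zero_iff.2 fun s _ => g.hx _ _
    have e3 : ∀ k, k ≠ k0 → TT q x n j (uu (XX q x k (j k))) = 0 := by
      intro k hk
      have := e2 k
      rw [if_neg] at this
      · exact (mul_eq_zero.1 this).resolve_left (mul_ne_zero (hN _ _) (LL_ne g _ _))
      · intro hh
        have := congrFun hh k0
        rw [Function.update_of_ne hk.symm] at this
        exact hk0 this
    have e4 := T_lagr g n j (uu (XX q x k0 (n k0)))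
    rw [Finset.sum_eq_single k0 (fun k _ hk => by rw [e3 k hk, mul_zero]) (by simp)] at e4
    have e5 := e2 k0
    have hP : ∏ s, (uu (XX q x k0 (n k0)) - uu (XX q x s (j s))) ≠ 0 := by
      refine Finset.prod_ne_zero_iff.2 fun s _ => g.du _ _ _ _ ?_
      by_cases hs : k0 = s
      · subst hs; exact Or.inr hk0
      · exact Or.inl hs
    have fin : TT q x n j (uu (XX q x k0 (n k0))) =
        LL q x j k0 (uu (XX q x k0 (n k0))) * TT q x n j (uu (XX q x k0 (j k0))) := by
      by_cases hmj : m = j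
      · subst hmj
        rw [if_pos rfl] at e1
        rw [if_pos hn.symm, hmk] at e5
        apply mul_left_cancel₀ (hN k0 (n k0))
        rw [e1, ← e5]; ring
      · rw [if_neg hmj] at e1
        have hnj' : n ≠ Function.update j k0 (j k0 + 1) := by
          intro hh
          apply hmj
          rw [hm, hh]; simp
        rw [if_neg hnj'] at e5
        rw [(mul_eq_zero.1 e1).resolve_left (hN _ _),
          (mul_eq_zero.1 e5).resolve_left (mul_ne_zero (hN _ _) (LL_ne g _ _)), mul_zero]
    rw [fin] at e4
    have e6 : (∏ s, (uu (XX q x k0 (n k0)) - uu (XX q x s (j s)))) * SS q x n j = 0 := by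
      linear_combination -e4
    exact (mul_eq_zero.1 e6).resolve_left hP

end

lemma pn_ne {a q : ℂ} {m : ℕ} (h : pn a q m ≠ 0) (k : ℕ) (hk : k < m) : 1 - a * q ^ k ≠ 0 :=
  Finset.prod_ne_zero_iff.1 h k (Finset.mem_range.2 hk)

/-- **C_ℓ Bailey Transform, first orthogonality relation.**
For generic parameters, `∑_{j ≤ y ≤ i} M(i;y) M*(y;j) = ∏_k δ(i_k, j_k)`. -/
theorem Cl_bailey_transform_first (ℓ : ℕ) (hℓ : 1 ≤ ℓ) (q : ℂ)
    (hq : q ≠ 0) (x : Fin ℓ → ℂ) (hx : ∀ k, x k ≠ 0)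
    (hd1 : ∀ i j : Fin ℓ → ℕ, (∀ k, j k ≤ i k) → ∀ r s : Fin ℓ,
      qp (q * (x r / x s) * q ^ ((j r : ℤ) - (j s : ℤ))) q ((i r : ℤ) - (j r : ℤ)) ≠ 0)
    (hd2 : ∀ i j : Fin ℓ → ℕ, (∀ k, j k ≤ i k) → ∀ r s : Fin ℓ,
      qp (q * (x r * x s) * q ^ ((j r : ℤ) + (j s : ℤ))) q ((i r : ℤ) - (j r : ℤ)) ≠ 0)
    (hd3 : ∀ i j : Fin ℓ → ℕ, (∀ k, j k ≤ i k) → ∀ r s : Fin ℓ,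
      qp ((x r * x s) * q ^ ((j r : ℤ) + (i s : ℤ))) q ((i r : ℤ) - (j r : ℤ)) ≠ 0)
    (hd4 : ∀ (i : Fin ℓ → ℕ) (r s : Fin ℓ), r < s →
      (1 : ℂ) - x r * x s * q ^ ((i r : ℤ) + (i s : ℤ)) ≠ 0) :
    ∀ i j : Fin ℓ → ℕ,
      ∑ y ∈ Finset.Icc j i, MC ℓ q x i y * MCstar ℓ q x y j =
        ∏ k, (if i k = j k then (1 : ℂ) else 0) := by
  
  have hX : ∀ r m, XX q x r m ≠ 0 := fun r m => mul_ne_zero (hx r) (pow_ne_zero _ hq)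
  have hqr : ∀ r : Fin ℓ, ∀ m : ℕ, q ^ (m + 1) ≠ 1 := by
    intro r m hm
    have h := hd1 (fun _ => m + 1) (fun _ => 0) (fun _ => Nat.zero_le _) r r
    rw [qp_sub _ _ _ _ (Nat.zero_le _)] at h
    apply pn_ne h m (by omega)
    rw [div_self (hx r), sub_self, zpow_zero, mul_one, mul_one, ← pow_succ', hm, sub_self]
  have hs1 : ∀ r s : Fin ℓ, r ≠ s → ∀ a b, XX q x r (a + 1) ≠ XX q x s b := by
    intro r s hrs a b hab
    have h := hd1 (fun t => if t = r then a + 1 else b) (fun t => if t = r then a else b)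
      (fun t => by split_ifs <;> omega) r s
    simp only [if_true, if_neg hrs.symm] at h
    rw [qp_sub _ _ _ _ (Nat.le_succ a)] at h
    apply pn_ne h 0 (by omega)
    have hXs := hX s b
    rw [zpow_sub₀ hq, zpow_natCast, zpow_natCast, pow_zero, mul_one, sub_eq_zero, mul_assoc, div_mul_div_comm]
    change 1 = q * (XX q x r a / XX q x s b)
    rw [← mul_div_assoc, ← XX_succ, hab, div_self hXs]
  have g : Gen q x := by
    refine ⟨hq, hX, ?_, ?_⟩
    · intro r s a b h hab
      by_cases hrs : r = s
      · subst hrs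
        have hne : a ≠ b := h.resolve_left (by simp)
        have h2 : q ^ a = q ^ b := mul_left_cancel₀ (hx r) hab
        have key : ∀ a b : ℕ, a < b → q ^ a = q ^ b → False := by
          intro a b hlt he
          obtain ⟨c, rfl⟩ : ∃ c, b = a + (c + 1) := ⟨b - a - 1, by omega⟩
          rw [pow_add] at he
          apply hqr r c
          have := pow_ne_zero a hq
          apply mul_left_cancel₀ this
          rw [← he, mul_one]
        rcases lt_or_gt_of_ne hne with hl | hl
        · exact key _ _ hl h2
        · exact key _ _ hl h2.symm
      · apply hs1 r s hrs a (b + 1)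
        rw [XX_succ, XX_succ, hab]
    · intro r s a b h hab
      by_cases hrs : r = s
      · subst hrs
        have hne : a + b ≠ 0 := h.resolve_left (by simp)
        have h := hd2 (fun _ => a + b) (fun _ => 0) (fun _ => Nat.zero_le _) r r
        rw [qp_sub _ _ _ _ (Nat.zero_le _)] at h
        apply pn_ne h (a + b - 1) (by omega)
        rw [← hab]
        have e : q ^ (a + b) = q * q ^ (a + b - 1) := by
          rw [← pow_succ']; congr 1; omega
        have e' : XX q x r a * XX q x r b = x r * x r * q ^ (a + b) := by
          unfold XX; ring
        rw [e', e]
        simp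
        ring
      · have key : ∀ r s a b, r < s → XX q x r a * XX q x s b = 1 → False := by
          intro r s a b hlt he
          have h := hd4 (fun t => if t = r then a else b) r s hlt
          simp only [if_true, if_neg hlt.ne'] at h
          apply h
          rw [zpow_add₀ hq, zpow_natCast, zpow_natCast, ← he]
          unfold XX; ring
        rcases lt_or_gt_of_ne hrs with hl | hl
        · exact key _ _ _ _ hl hab
        · exact key _ _ _ _ hl (by rw [mul_comm]; exact hab)
  intro i j
  change SS q x i j = _
  have hprod : (∏ k, (if i k = j k then (1 : ℂ) else 0)) = if i = j then 1 else 0 := by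
    split_ifs with h
    · subst h; simp
    · obtain ⟨k, hk⟩ := Function.ne_iff.1 h
      exact Finset.prod_eq_zero (Finset.mem_univ k) (if_neg hk)
  rw [hprod]
  by_cases hle : j ≤ i
  · exact SS_main g (∑ s, i s - ∑ s, j s) i j
      (by have := Finset.sum_le_sum (s := Finset.univ) (fun s _ => hle s); omega)
  · rw [SS_empty _ _ hle, if_neg]
    rintro rfl; exact hle le_rfl
end
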